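/- Fix a > 0 and let θ : [0,∞) → 𝒳ₙ be continuous with J^a(θ) := lim_{T→∞} J^a_T(θ) < ∞. Then the Dirichlet energy E(θ) := lim_{T→∞} E_T(θ) is finite; more precisely E(θ) ≤ J^a(θ) + G_a(θ_0), where G_a(θ) := −a·log ∏_{1≤j<k≤n} |sin((θ^k − θ^j)/2)|. -/

import Mathlib

open MeasureTheory Filter Set
open scoped Real Topology ENNReal Classical

noncomputable section

/-- The configuration space `𝒳ₙ` of `n` ordered points on (a lift of) the circle:
`θ¹ < θ² < ⋯ < θⁿ < θ¹ + 2π`. -/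
def Xspace (n : ℕ) : Set (Fin n → ℝ) :=
  {x | StrictMono x ∧ ∀ i j : Fin n, x i < x j + 2 * π}

/-- The value `θ^{j+1}`, with the convention `θ^{n+1} = θ¹ + 2π`. -/
def nextVal {n : ℕ} (x : Fin n → ℝ) (j : Fin n) : ℝ :=
  if h : (j : ℕ) + 1 < n then x ⟨(j : ℕ) + 1, h⟩ else x ⟨0, j.pos⟩ + 2 * π

/-- The gap `θ^{j+1} - θ^j` (with wrap-around convention). -/
def gap {n : ℕ} (x : Fin n → ℝ) (j : Fin n) : ℝ := nextVal x j - x j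

/-- The minimal gap `Δ(θ) = min_j (θ^{j+1} - θ^j)`. -/
def minGap {n : ℕ} (x : Fin n → ℝ) : ℝ := ⨅ j : Fin n, gap x j

/-- `d(θ) := max_j |2π/n - (θ^{j+1} - θ^j)|`. -/
def dGap {n : ℕ} (x : Fin n → ℝ) : ℝ := ⨆ j : Fin n, |2 * π / n - gap x j|

/-- `φ^j(θ) = ∑_{k ≠ j} cot((θ^j - θ^k)/2)`. -/
def phi {n : ℕ} (x : Fin n → ℝ) (j : Fin n) : ℝ :=
  ∑ k ∈ Finset.univ.erase j, Real.cot ((x j - x k) / 2)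

/-- `φ_a^j := (a/4) φ^j`. -/
def phiA {n : ℕ} (a : ℝ) (x : Fin n → ℝ) (j : Fin n) : ℝ := a / 4 * phi x j

/-- Absolute continuity of every coordinate of `θ` on `[0, T]`: each component is the
integral of a (locally) integrable function. -/
def AbsCont {n : ℕ} (T : ℝ) (θ : ℝ → Fin n → ℝ) : Prop :=
  ∃ v : ℝ → Fin n → ℝ, (∀ j, IntegrableOn (fun s => v s j) (Icc 0 T)) ∧
    ∀ t ∈ Icc (0 : ℝ) T, ∀ j, θ t j = θ 0 j + ∫ s in (0 : ℝ)..t, v s j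

/-- Truncated multiradial Dirichlet energy `J_T(θ)`. -/
def mEnergy (n : ℕ) (T : ℝ) (θ : ℝ → Fin n → ℝ) : ℝ≥0∞ :=
  if AbsCont T θ then
    ENNReal.ofReal (1 / 2) *
      ∫⁻ s in Ioc (0 : ℝ) T,
        ENNReal.ofReal (∑ j, (deriv (fun t => θ t j) s - 2 * phi (θ s) j) ^ 2)
  else ⊤

/-- Multiradial Dirichlet energy `J(θ) = lim_{T→∞} J_T(θ)`, the supremum of the
nondecreasing family `J_T(θ)`. -/
def mEnergyInf (n : ℕ) (θ : ℝ → Fin n → ℝ) : ℝ≥0∞ := ⨆ T : ℝ, mEnergy n T θ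

/-- Truncated multiradial Dirichlet energy with parameter `a`, `J^a_T(θ)`. -/
def mEnergyA (n : ℕ) (a T : ℝ) (θ : ℝ → Fin n → ℝ) : ℝ≥0∞ :=
  if AbsCont T θ then
    ENNReal.ofReal (1 / 2) *
      ∫⁻ s in Ioc (0 : ℝ) T,
        ENNReal.ofReal (∑ j, (deriv (fun t => θ t j) s - 2 * phiA a (θ s) j) ^ 2)
  else ⊤

/-- `J^a(θ) = lim_{T→∞} J^a_T(θ)` (supremum of the nondecreasing family). -/
def mEnergyAInf (n : ℕ) (a : ℝ) (θ : ℝ → Fin n → ℝ) : ℝ≥0∞ := ⨆ T : ℝ, mEnergyA n a T θ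

/-- Truncated Dirichlet energy `E_T(θ)`. -/
def dEnergy (n : ℕ) (T : ℝ) (θ : ℝ → Fin n → ℝ) : ℝ≥0∞ :=
  if AbsCont T θ then
    ENNReal.ofReal (1 / 2) *
      ∫⁻ s in Ioc (0 : ℝ) T, ENNReal.ofReal (∑ j, deriv (fun t => θ t j) s ^ 2)
  else ⊤

/-- `E(θ) = lim_{T→∞} E_T(θ)` (supremum of the nondecreasing family). -/
def dEnergyInf (n : ℕ) (θ : ℝ → Fin n → ℝ) : ℝ≥0∞ := ⨆ T : ℝ, dEnergy n T θ

/-- `F(θ) := ∏_{j<k} |sin((θ^k - θ^j)/2)|`. -/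
def Fprod {n : ℕ} (x : Fin n → ℝ) : ℝ :=
  ∏ j : Fin n, ∏ k ∈ Finset.univ.filter (fun k => j < k), |Real.sin ((x k - x j) / 2)|

/-- `G_a(θ) := -a log F(θ)`. -/
def Ga {n : ℕ} (a : ℝ) (x : Fin n → ℝ) : ℝ := -(a * Real.log (Fprod x))

namespace AbsolutelyContinuousOnInterval

theorem congr {X : Type*} [PseudoMetricSpace X] {f g : ℝ → X} {a b : ℝ}
    (hf : AbsolutelyContinuousOnInterval f a b) (hfg : EqOn f g (uIcc a b)) :
    AbsolutelyContinuousOnInterval g a b := by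
  rw [absolutelyContinuousOnInterval_iff] at hf ⊢
  intro ε hε
  obtain ⟨δ, hδ, h⟩ := hf ε hε
  refine ⟨δ, hδ, fun E hE hEδ => ?_⟩
  rw [Finset.sum_congr rfl fun i hi => by
    rw [← hfg (hE.1 i hi).1, ← hfg (hE.1 i hi).2]]
  exact h E hE hEδ

theorem const {X : Type*} [PseudoMetricSpace X] (c : X) (a b : ℝ) :
    AbsolutelyContinuousOnInterval (fun _ => c) a b :=
  ((LipschitzWith.const c).lipschitzOnWith (s := uIcc a b)).absolutelyContinuousOnInterval

theorem finset_sum {F ι : Type*} [SeminormedAddCommGroup F] {a b : ℝ} (s : Finset ι)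
    {f : ι → ℝ → F} (hf : ∀ i ∈ s, AbsolutelyContinuousOnInterval (f i) a b) :
    AbsolutelyContinuousOnInterval (fun x => ∑ i ∈ s, f i x) a b := by
  induction s using Finset.induction_on with
  | empty => simpa using const (0 : F) a b
  | insert i s hi ih =>
    simp only [Finset.sum_insert hi]
    exact (hf i (Finset.mem_insert_self i s)).add
      (ih fun k hk => hf k (Finset.mem_insert_of_mem hk))

theorem lipschitzOnWith_comp {X Y : Type*} [PseudoMetricSpace X] [PseudoMetricSpace Y]
    {f : ℝ → X} {g : X → Y} {a b : ℝ} {K : NNReal}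
    (hf : AbsolutelyContinuousOnInterval f a b) (hg : LipschitzOnWith K g (f '' uIcc a b)) :
    AbsolutelyContinuousOnInterval (fun x => g (f x)) a b := by
  rw [absolutelyContinuousOnInterval_iff] at hf ⊢
  intro ε hε
  obtain ⟨δ, hδ, h⟩ := hf (ε / (K + 1)) (by positivity)
  refine ⟨δ, hδ, fun E hE hEδ => ?_⟩
  have hsum := h E hE hEδ
  rw [lt_div_iff₀ (by positivity)] at hsum
  refine lt_of_le_of_lt ?_ hsum
  rw [Finset.sum_mul]
  refine Finset.sum_le_sum fun i hi => ?_
  have hi' := hg.dist_le_mul _ (mem_image_of_mem f (hE.1 i hi).1) _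
    (mem_image_of_mem f (hE.1 i hi).2)
  nlinarith [dist_nonneg (x := f (E.2 i).1) (y := f (E.2 i).2)]

/-- Composition of a `C¹` function with a real absolutely continuous function. -/
theorem contDiffOn_comp {f g : ℝ → ℝ} {a b : ℝ} {s : Set ℝ}
    (hf : AbsolutelyContinuousOnInterval f a b) (hg : ContDiffOn ℝ 1 g s)
    (hfs : MapsTo f (uIcc a b) s) :
    AbsolutelyContinuousOnInterval (fun x => g (f x)) a b := by
  have hconv : Convex ℝ (f '' uIcc a b) :=
    (isPreconnected_uIcc.image f hf.continuousOn).ordConnected.convex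
  obtain ⟨K, hK⟩ := (hg.mono hfs.image_subset).exists_lipschitzOnWith (by decide) hconv
    (isCompact_uIcc.image_of_continuousOn hf.continuousOn)
  exact hf.lipschitzOnWith_comp hK

end AbsolutelyContinuousOnInterval

theorem AbsCont.absolutelyContinuousOnInterval {n : ℕ} {T : ℝ} {θ : ℝ → Fin n → ℝ}
    (h : AbsCont T θ) (hT : 0 ≤ T) (j : Fin n) :
    AbsolutelyContinuousOnInterval (fun t => θ t j) 0 T := by
  obtain ⟨v, hv, hθ⟩ := h
  have hint : IntervalIntegrable (fun s => v s j) volume 0 T := by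
    rw [intervalIntegrable_iff_integrableOn_Icc_of_le hT]
    exact hv j
  refine ((AbsolutelyContinuousOnInterval.const (θ 0 j) 0 T).add
    (hint.absolutelyContinuousOnInterval_intervalIntegral left_mem_uIcc)).congr fun t ht => ?_
  rw [uIcc_of_le hT] at ht
  exact (hθ t ht j).symm

theorem Xspace.sin_pos {n : ℕ} {x : Fin n → ℝ} (hx : x ∈ Xspace n) {j k : Fin n} (hjk : j < k) :
    0 < Real.sin ((x k - x j) / 2) :=
  Real.sin_pos_of_pos_of_lt_pi (by linarith [hx.1 hjk]) (by linarith [hx.2 k j])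

theorem Xspace.log_Fprod {n : ℕ} {x : Fin n → ℝ} (hx : x ∈ Xspace n) :
    Real.log (Fprod x) =
      ∑ j : Fin n, ∑ k ∈ Finset.univ.filter (fun k => j < k),
        Real.log (Real.sin ((x k - x j) / 2)) := by
  have hne : ∀ j : Fin n, ∀ k ∈ Finset.univ.filter (fun k => j < k),
      |Real.sin ((x k - x j) / 2)| ≠ 0 := fun j k hk =>
    abs_ne_zero.2 (Xspace.sin_pos hx (Finset.mem_filter.1 hk).2).ne'
  rw [Fprod, Real.log_prod fun j _ => Finset.prod_ne_zero_iff.2 (hne j)]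
  refine Finset.sum_congr rfl fun j _ => ?_
  rw [Real.log_prod (hne j)]
  exact Finset.sum_congr rfl fun k _ => Real.log_abs _

theorem log_Fprod_nonpos {n : ℕ} (x : Fin n → ℝ) : Real.log (Fprod x) ≤ 0 :=
  Real.log_nonpos (Finset.prod_nonneg fun _ _ => Finset.prod_nonneg fun _ _ => abs_nonneg _)
    (Finset.prod_le_one (fun _ _ => Finset.prod_nonneg fun _ _ => abs_nonneg _)
      fun _ _ => Finset.prod_le_one (fun _ _ => abs_nonneg _) fun _ _ => Real.abs_sin_le_one _)

theorem sum_mul_sum_erase_of_antisymm {n : ℕ} (d : Fin n → ℝ) (c : Fin n → Fin n → ℝ)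
    (hc : ∀ j k, c j k = -c k j) :
    ∑ j, d j * ∑ k ∈ Finset.univ.erase j, c j k =
      ∑ j, ∑ k ∈ Finset.univ.filter (fun k => j < k), (d k - d j) * c k j := by
  have hsplit : ∀ j : Fin n, d j * ∑ k ∈ Finset.univ.erase j, c j k =
      (∑ k, if j < k then d j * c j k else 0) + ∑ k, if k < j then d j * c j k else 0 := by
    intro j
    rw [← Finset.sum_add_distrib, Finset.mul_sum, ← Finset.sum_erase_add _ _ (Finset.mem_univ j)]
    simp only [lt_self_iff_false, if_false, add_zero]
    refine Finset.sum_congr rfl fun k hk => ?_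
    rcases lt_or_gt_of_ne (Finset.ne_of_mem_erase hk) with h | h
    · simp [h, h.not_gt]
    · simp [h, h.not_gt]
  rw [Finset.sum_congr rfl fun j _ => hsplit j, Finset.sum_add_distrib,
    Finset.sum_comm (f := fun j k => if k < j then d j * c j k else 0), ← Finset.sum_add_distrib]
  refine Finset.sum_congr rfl fun j _ => ?_
  rw [← Finset.sum_add_distrib, Finset.sum_filter]
  refine Finset.sum_congr rfl fun k _ => ?_
  split_ifs
  · rw [hc j k]; ring
  · simp

theorem cot_neg_eq (x : ℝ) : Real.cot (-x) = -Real.cot x := by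
  simp [Real.cot_eq_cos_div_sin, div_neg]

/-- The gradient of `log F` is `φ / 2`. -/
theorem Xspace.hasDerivAt_log_sin_sum {n : ℕ} {θ : ℝ → Fin n → ℝ} {d : Fin n → ℝ} {s : ℝ}
    (hx : θ s ∈ Xspace n) (hd : ∀ j, HasDerivAt (fun t => θ t j) (d j) s) :
    HasDerivAt (fun t => ∑ j : Fin n, ∑ k ∈ Finset.univ.filter (fun k => j < k),
      Real.log (Real.sin ((θ t k - θ t j) / 2))) ((∑ j, d j * phi (θ s) j) / 2) s := by
  have hsum : ∑ j, d j * phi (θ s) j = ∑ j, ∑ k ∈ Finset.univ.filter (fun k => j < k),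
      (d k - d j) * Real.cot ((θ s k - θ s j) / 2) :=
    sum_mul_sum_erase_of_antisymm d (fun j k => Real.cot ((θ s j - θ s k) / 2)) fun j k => by
      rw [← cot_neg_eq]; congr 1; ring
  rw [hsum, Finset.sum_div]
  refine HasDerivAt.fun_sum fun j _ => ?_
  rw [Finset.sum_div]
  refine HasDerivAt.fun_sum fun k hk => ?_
  have hne := (Xspace.sin_pos hx (Finset.mem_filter.1 hk).2).ne'
  refine ((((hd k).sub (hd j)).div_const 2).sin.log hne).congr_deriv ?_
  simp only [Real.cot_eq_cos_div_sin, Pi.sub_apply]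
  ring

theorem absolutelyContinuousOnInterval_log_sin_sum {n : ℕ} {T : ℝ} {θ : ℝ → Fin n → ℝ}
    (h : AbsCont T θ) (hT : 0 ≤ T) (hX : ∀ t ∈ Icc 0 T, θ t ∈ Xspace n) :
    AbsolutelyContinuousOnInterval (fun t => ∑ j : Fin n,
      ∑ k ∈ Finset.univ.filter (fun k => j < k),
        Real.log (Real.sin ((θ t k - θ t j) / 2))) 0 T := by
  refine AbsolutelyContinuousOnInterval.finset_sum _ fun j _ =>
    AbsolutelyContinuousOnInterval.finset_sum _ fun k hk => ?_
  refine AbsolutelyContinuousOnInterval.contDiffOn_comp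
    (f := fun t => θ t k - θ t j) (g := fun u => Real.log (Real.sin (u / 2)))
    (s := {u | Real.sin (u / 2) ≠ 0})
    ((h.absolutelyContinuousOnInterval hT k).sub (h.absolutelyContinuousOnInterval hT j)) ?_ ?_
  · exact ContDiffOn.log (by fun_prop) fun u hu => hu
  · intro t ht
    rw [uIcc_of_le hT] at ht
    exact (Xspace.sin_pos (hX t ht) (Finset.mem_filter.1 hk).2).ne'

theorem measurable_phi {n : ℕ} (j : Fin n) : Measurable fun x : Fin n → ℝ => phi x j := by
  unfold phi
  simp only [Real.cot_eq_cos_div_sin]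
  fun_prop

/-- The finite-time bound `E_T(θ) ≤ J^a_T(θ) + G_a(θ_0)`. -/
theorem dEnergy_le_mEnergyA_add_Ga {n : ℕ} {a : ℝ} (ha : 0 < a) {θ : ℝ → Fin n → ℝ}
    (hcont : ContinuousOn θ (Ici 0)) (hX : ∀ t ∈ Ici (0 : ℝ), θ t ∈ Xspace n)
    {T : ℝ} (hJ : mEnergyA n a T θ ≠ ⊤) :
    dEnergy n T θ ≤ mEnergyA n a T θ + ENNReal.ofReal (Ga a (θ 0)) := by
  have hAC : AbsCont T θ := by
    by_contra h
    exact hJ (if_neg h)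
  rcases lt_or_ge T 0 with hT | hT
  · simp [dEnergy, hAC, Ioc_eq_empty_of_le hT.le]
  rw [mEnergyA, if_pos hAC, ← lintegral_const_mul' _ _ ENNReal.ofReal_ne_top] at hJ ⊢
  rw [dEnergy, if_pos hAC, ← lintegral_const_mul' _ _ ENNReal.ofReal_ne_top]
  simp only [← ENNReal.ofReal_mul (by norm_num : (0 : ℝ) ≤ 1 / 2)] at hJ ⊢
  set q : ℝ → ℝ := fun s =>
    1 / 2 * ∑ j, (deriv (fun t => θ t j) s - 2 * phiA a (θ s) j) ^ 2 with hq
  set L : ℝ → ℝ := fun t => ∑ j : Fin n, ∑ k ∈ Finset.univ.filter (fun k => j < k),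
    Real.log (Real.sin ((θ t k - θ t j) / 2)) with hL
  have hLac : AbsolutelyContinuousOnInterval L 0 T :=
    absolutelyContinuousOnInterval_log_sin_sum hAC hT fun t ht => hX t ht.1
  have hq0 : ∀ s, 0 ≤ q s := fun s => by positivity
  have hθm : AEMeasurable θ (volume.restrict (Ioc 0 T)) :=
    (hcont.mono fun t ht => ht.1.le).aemeasurable measurableSet_Ioc
  have hqm : AEStronglyMeasurable q (volume.restrict (Ioc 0 T)) := by
    refine (AEMeasurable.const_mul (Finset.aemeasurable_fun_sum _ fun j _ => ?_)
      _).aestronglyMeasurable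
    exact ((measurable_deriv _).aemeasurable.sub
      ((((measurable_phi j).comp_aemeasurable hθm).const_mul (a / 4)).const_mul 2)).pow_const 2
  have hqi : IntegrableOn q (Ioc 0 T) :=
    (lintegral_ofReal_ne_top_iff_integrable hqm (ae_of_all _ hq0)).1 hJ
  have hLi : IntegrableOn (fun s => a * deriv L s) (Ioc 0 T) :=
    (((intervalIntegrable_iff_integrableOn_Ioc_of_le hT).1
      hLac.intervalIntegrable_deriv)).const_mul a
  have hpt : ∀ᵐ s ∂volume.restrict (Ioc 0 T),
      1 / 2 * ∑ j, deriv (fun t => θ t j) s ^ 2 ≤ q s + a * deriv L s := by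
    rw [ae_restrict_iff' measurableSet_Ioc]
    have hdiff : ∀ᵐ s, ∀ j : Fin n, s ∈ uIcc 0 T → DifferentiableAt ℝ (fun t => θ t j) s :=
      ae_all_iff.2 fun j => (hAC.absolutelyContinuousOnInterval hT j).ae_differentiableAt
    filter_upwards [hdiff] with s hs hsT
    have hsT' : s ∈ uIcc 0 T := by
      rw [uIcc_of_le hT]
      exact Ioc_subset_Icc_self hsT
    rw [(Xspace.hasDerivAt_log_sin_sum (hX s hsT.1.le)
      fun j => (hs j hsT').hasDerivAt).deriv, hq]
    simp only [Finset.mul_sum, Finset.sum_div, ← Finset.sum_add_distrib]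
    refine Finset.sum_le_sum fun j _ => ?_
    rw [phiA]
    nlinarith [sq_nonneg (a * phi (θ s) j)]
  have hLint : ∫ s in Ioc 0 T, a * deriv L s ≤ Ga a (θ 0) := by
    rw [integral_const_mul, ← intervalIntegral.integral_of_le hT, hLac.integral_deriv_eq_sub, hL]
    simp only
    rw [← Xspace.log_Fprod (hX T hT), ← Xspace.log_Fprod (hX 0 self_mem_Ici), Ga]
    nlinarith [mul_nonneg ha.le (neg_nonneg.2 (log_Fprod_nonpos (θ T)))]
  have hsum0 : 0 ≤ᵐ[volume.restrict (Ioc 0 T)] fun s => q s + a * deriv L s := by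
    filter_upwards [hpt] with s hs
    exact le_trans (by positivity) hs
  calc ∫⁻ s in Ioc 0 T, ENNReal.ofReal (1 / 2 * ∑ j, deriv (fun t => θ t j) s ^ 2)
      ≤ ∫⁻ s in Ioc 0 T, ENNReal.ofReal (q s + a * deriv L s) := by
        refine lintegral_mono_ae ?_
        filter_upwards [hpt] with s hs
        exact ENNReal.ofReal_le_ofReal hs
    _ = ENNReal.ofReal ((∫ s in Ioc 0 T, q s) + ∫ s in Ioc 0 T, a * deriv L s) := by
        rw [← integral_add hqi hLi]
        exact (ofReal_integral_eq_lintegral_ofReal (hqi.add hLi) hsum0).symm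
    _ ≤ ENNReal.ofReal (∫ s in Ioc 0 T, q s) + ENNReal.ofReal (Ga a (θ 0)) :=
        (ENNReal.ofReal_le_ofReal (by gcongr)).trans ENNReal.ofReal_add_le
    _ = _ := by
        rw [ofReal_integral_eq_lintegral_ofReal hqi (ae_of_all _ hq0)]

/-- If `J^a(θ) < ∞` then the Dirichlet energy is finite; more precisely
`E(θ) ≤ J^a(θ) + G_a(θ_0)`. -/
theorem finite_multiradial_energy_finite_dirichlet_energy
    (n : ℕ) (hn : 1 ≤ n) (a : ℝ) (ha : 0 < a) (θ : ℝ → Fin n → ℝ)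
    (hcont : ContinuousOn θ (Ici 0))
    (hX : ∀ t ∈ Ici (0 : ℝ), θ t ∈ Xspace n)
    (hJ : mEnergyAInf n a θ < ⊤) :
    dEnergyInf n θ < ⊤ ∧
      dEnergyInf n θ ≤ mEnergyAInf n a θ + ENNReal.ofReal (Ga a (θ 0)) := by
  have hle : dEnergyInf n θ ≤ mEnergyAInf n a θ + ENNReal.ofReal (Ga a (θ 0)) := by
    refine iSup_le fun T => ?_
    have hT : mEnergyA n a T θ ≤ mEnergyAInf n a θ := le_iSup (fun T => mEnergyA n a T θ) T
    exact (dEnergy_le_mEnergyA_add_Ga ha hcont hX (hT.trans_lt hJ).ne).trans (by gcongr)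
  exact ⟨hle.trans_lt (ENNReal.add_lt_top.2 ⟨hJ, ENNReal.ofReal_lt_top⟩), hle⟩

end
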